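/- There exists an absolute constant K such that for every finite set A of positive real numbers with |A| ≥ 2, one has |A·A|^{10} · |A+A|^9 ≥ K · |A|^{24} / (log|A|)^2. -/

import Mathlib

open Finset Pointwise

noncomputable def dlt (X Y : Finset ℝ) (s : ℝ) : ℕ :=
  ((X ×ˢ Y).filter (fun p => p.1 - p.2 = s)).card

noncomputable def sg (X Y : Finset ℝ) (s : ℝ) : ℕ :=
  ((X ×ˢ Y).filter (fun p => p.1 + p.2 = s)).card

noncomputable def En (X Y : Finset ℝ) : ℝ :=
  ∑ s ∈ X - X, (dlt X X s : ℝ) * (dlt Y Y s : ℝ)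

noncomputable def E3 (X : Finset ℝ) : ℝ :=
  ∑ s ∈ X - X, (dlt X X s : ℝ) ^ 3

noncomputable def E15 (X : Finset ℝ) : ℝ :=
  ∑ s ∈ X - X, (dlt X X s : ℝ) ^ ((3 : ℝ) / 2)

/-!
Call a difference popular when it has many representations. If `s = a - b`, then for every `c ∈ A`
the line `y = (x + s) * c` passes through the point `(b, a * c)` of the grid `B ×ˢ (A * A)`, so a
Szemerédi–Trotter bound limits the number of popular differences in terms of `|A * A|`. All these
lines are increasing, which makes an elementary incidence bound available: cut the grid into `k * k`
cells by monotone colourings of its sides. An increasing curve meets fewer than `2 * k` cells, so a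
curve with `4 * k` points has many pairs of points inside a common cell, while each pair belongs to
at most one curve.

The bound on popular differences is fed into the argument of Schoen and Shkredov. Unpopular
differences carry at least half of the additive energy of `A`. For the slices `A ∩ (s + A)`, two
applications of the Cauchy–Schwarz inequality bound `∑ |A ∩ (s + A)| ^ 2` over unpopular `s` by the
third moment of the representation function and by the energy `E[A, A + A]`; the popularity bound
controls both, the third moment at the cost of a logarithm.
-/

open scoped Combinatorics.Additive

section Coloring

variable {α κ : Type*}

theorem two_mul_card_le_card_filter_offDiag_add [DecidableEq κ] {X : Finset α}
    {K : Finset κ} {f : α → κ} (hf : ∀ x ∈ X, f x ∈ K) :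
    2 * #X ≤ #{p ∈ X.offDiag | f p.1 = f p.2} + 2 * #K := by
  have fibers : #{p ∈ X.offDiag | f p.1 = f p.2} = ∑ c ∈ K, #{x ∈ X | f x = c}.offDiag := by
    rw [card_eq_sum_card_fiberwise (f := fun p ↦ f p.1) (t := K)]
    · refine sum_congr rfl fun c _ ↦ congrArg card ?_
      ext p
      simp only [mem_filter, mem_offDiag]
      grind
    · intro p hp
      exact hf _ (mem_offDiag.1 (mem_filter.1 hp).1).1
  have fiber_le (n : ℕ) : 2 * n ≤ (n * n - n) + 2 := by
    rcases n with _ | _ | n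
    · simp
    · simp
    · have : (n + 2) * (n + 2) - (n + 2) = (n + 2) * (n + 1) := by
        rw [← Nat.mul_sub_one]; rfl
      simp only [this]
      nlinarith
  rw [fibers, card_eq_sum_card_fiberwise (f := f) (t := K) hf, mul_sum]
  calc ∑ c ∈ K, 2 * #{x ∈ X | f x = c}
      ≤ ∑ c ∈ K, (#{x ∈ X | f x = c}.offDiag + 2) :=
        sum_le_sum fun c _ ↦ by simpa only [offDiag_card] using fiber_le _
    _ = ∑ c ∈ K, #{x ∈ X | f x = c}.offDiag + 2 * #K := by
        rw [sum_add_distrib, sum_const, smul_eq_mul, mul_comm 2]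

/-- The ordered pairs of points of `X`, the diagonal included, that receive the same colour under
`f`. Their number measures how well `f` separates the points of `X`. -/
def monochromaticPairs [DecidableEq κ] (X : Finset α) (f : α → κ) : Finset (α × α) :=
  {p ∈ X ×ˢ X | f p.1 = f p.2}

theorem card_monochromaticPairs_le [DecidableEq κ] {X : Finset α} {f : α → κ} {w : ℕ}
    (hw : ∀ c, #{x ∈ X | f x = c} ≤ w) : #(monochromaticPairs X f) ≤ #X * w := by
  calc #(monochromaticPairs X f) = ∑ x ∈ X, #{y ∈ X | f y = f x} := by
        simp only [monochromaticPairs, card_filter, sum_product, eq_comm]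
    _ ≤ #X * w := by simpa using sum_le_card_nsmul X _ w fun x _ ↦ hw (f x)

variable [LinearOrder α]

/-- The number of elements of `B` below `x`. Dividing it by a block length gives a monotone
colouring of the whole order that cuts `B` into blocks. -/
def rankIn (B : Finset α) (x : α) : ℕ := #{y ∈ B | y < x}

theorem rankIn_mono (B : Finset α) : Monotone (rankIn B) := fun _ _ hxy ↦
  card_le_card <| monotone_filter_right _ fun _ _ hz ↦ hz.trans_le hxy

theorem rankIn_strictMonoOn (B : Finset α) : StrictMonoOn (rankIn B) B := fun x hx _ _ hxy ↦
  card_lt_card <| (ssubset_iff_of_subset <|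
    monotone_filter_right _ fun _ _ hz ↦ hz.trans hxy).2 ⟨x, by simpa using ⟨hx, hxy⟩, by simp⟩

theorem card_filter_rankIn_div_eq_le (B : Finset α) {w : ℕ} (hw : 0 < w) (j : ℕ) :
    #{x ∈ B | rankIn B x / w = j} ≤ w := by
  calc #{x ∈ B | rankIn B x / w = j} ≤ #(Ico (j * w) (j * w + w)) := by
        refine card_le_card_of_injOn (rankIn B) (fun x hx ↦ ?_)
          ((rankIn_strictMonoOn B).injOn.mono (filter_subset _ _))
        obtain rfl := (mem_filter.1 hx).2
        exact mem_coe.2 <| mem_Ico.2 ⟨Nat.div_mul_le_self _ _, Nat.lt_div_mul_add hw⟩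
    _ = w := by simp

theorem exists_monotone_coloring {B : Finset α} {k : ℕ} (hk : 0 < k) (hkB : k ≤ #B) :
    ∃ f : α → ℕ, Monotone f ∧ (∀ x, f x < k) ∧ #(monochromaticPairs B f) * k ≤ 2 * #B ^ 2 := by
  set w := #B / k + 1 with hw
  refine ⟨fun x ↦ rankIn B x / w, fun x y h ↦ Nat.div_le_div_right (rankIn_mono B h),
    fun x ↦ Nat.div_lt_of_lt_mul ?_, ?_⟩
  · calc rankIn B x ≤ #B := card_filter_le _ _
      _ < w * k := by rw [mul_comm]; exact Nat.lt_mul_div_succ _ hk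
  · calc #(monochromaticPairs B fun x ↦ rankIn B x / w) * k
        ≤ #B * w * k := by
          gcongr
          exact card_monochromaticPairs_le (card_filter_rankIn_div_eq_le B (Nat.succ_pos _))
      _ = #B * (#B / k * k + k) := by rw [hw]; ring
      _ ≤ #B * (#B + #B) := by gcongr; exact Nat.div_mul_le_self _ _
      _ = 2 * #B ^ 2 := by ring

end Coloring

section Incidences

variable {α β ι : Type*} [LinearOrder α] [LinearOrder β]

/-- A finite set of points in the product of two linear orders is an increasing curve if it is the
graph of a strictly increasing partial function. Such curves play the role of the lines of positive
slope in the incidence bound. -/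
def IsIncreasingCurve (s : Finset (α × β)) : Prop :=
  ∀ p ∈ s, ∀ q ∈ s, p.1 < q.1 ↔ p.2 < q.2

namespace IsIncreasingCurve

variable {s : Finset (α × β)} {p q : α × β}

theorem fst_eq_iff (h : IsIncreasingCurve s) (hp : p ∈ s) (hq : q ∈ s) :
    p.1 = q.1 ↔ p.2 = q.2 := by
  simp only [le_antisymm_iff, ← not_lt, h p hp q hq, h q hq p hp]

theorem card_le_of_subset_product (h : IsIncreasingCurve s) {B : Finset α} {D : Finset β}
    (hs : s ⊆ B ×ˢ D) : #s ≤ #B ∧ #s ≤ #D :=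
  ⟨card_le_card_of_injOn Prod.fst (fun _ hp ↦ (mem_product.1 (hs hp)).1) fun _ hp _ hq e ↦
      Prod.ext e ((h.fst_eq_iff hp hq).1 e),
    card_le_card_of_injOn Prod.snd (fun _ hp ↦ (mem_product.1 (hs hp)).2) fun _ hp _ hq e ↦
      Prod.ext ((h.fst_eq_iff hp hq).2 e) e⟩

theorem add_eq_add_iff (h : IsIncreasingCurve s) (hp : p ∈ s) (hq : q ∈ s) {f : α → ℕ} {g : β → ℕ}
    (hf : Monotone f) (hg : Monotone g) :
    f p.1 + g p.2 = f q.1 + g q.2 ↔ f p.1 = f q.1 ∧ g p.2 = g q.2 := by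
  refine ⟨fun e ↦ ?_, fun e ↦ by rw [e.1, e.2]⟩
  wlog hpq : p.1 ≤ q.1 generalizing p q
  · simpa only [eq_comm] using this hq hp e.symm (le_of_not_ge hpq)
  have hpq' : p.2 ≤ q.2 := not_lt.1 <| (h q hq p hp).not.1 hpq.not_gt
  have := hf hpq
  have := hg hpq'
  omega

-- An increasing curve meets at most `2 * k - 1` of the `k * k` cells, because `f + g` takes at most
-- that many values and, along the curve, determines the cell.
theorem two_mul_card_le (h : IsIncreasingCurve s) {f : α → ℕ} {g : β → ℕ} (hf : Monotone f)
    (hg : Monotone g) {k : ℕ} (hfk : ∀ x, f x < k) (hgk : ∀ y, g y < k) :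
    2 * #s ≤ #{p ∈ s.offDiag | f p.1.1 = f p.2.1 ∧ g p.1.2 = g p.2.2} + 2 * (2 * k - 1) := by
  have key := two_mul_card_le_card_filter_offDiag_add (X := s) (K := range (2 * k - 1))
    (f := fun p ↦ f p.1 + g p.2) fun p _ ↦ by
      have := hfk p.1
      have := hgk p.2
      simp only [mem_range]
      omega
  rw [card_range] at key
  convert key using 4 with p hp
  obtain ⟨hp₁, hp₂, -⟩ := mem_offDiag.1 hp
  exact (h.add_eq_add_iff hp₁ hp₂ hf hg).symm

end IsIncreasingCurve

theorem sum_card_filter_offDiag_le {B : Finset α} {D : Finset β} {L : Finset ι}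
    {ℓ : ι → Finset (α × β)} (hsub : ∀ i ∈ L, ℓ i ⊆ B ×ˢ D)
    (hmeet : (L : Set ι).Pairwise fun i j ↦ #(ℓ i ∩ ℓ j) ≤ 1) (f : α → ℕ) (g : β → ℕ) :
    ∑ i ∈ L, #{p ∈ (ℓ i).offDiag | f p.1.1 = f p.2.1 ∧ g p.1.2 = g p.2.2} ≤
      #(monochromaticPairs B f) * #(monochromaticPairs D g) := by
  rw [← card_sigma, ← card_product]
  refine card_le_card_of_injOn
    (fun z ↦ ((z.2.1.1, z.2.2.1), (z.2.1.2, z.2.2.2))) ?_ ?_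
  · rintro ⟨i, p, q⟩ h
    simp only [mem_coe, mem_sigma, mem_filter, mem_offDiag] at h
    obtain ⟨hi, ⟨hp, hq, -⟩, hf, hg⟩ := h
    have hp := mem_product.1 (hsub i hi hp)
    have hq := mem_product.1 (hsub i hi hq)
    simp [monochromaticPairs, *]
  · rintro ⟨i, p, q⟩ h ⟨j, p', q'⟩ h' e
    simp only [mem_coe, mem_sigma, mem_filter, mem_offDiag] at h h'
    obtain ⟨hi, ⟨hp, hq, hpq⟩, -⟩ := h
    obtain ⟨hj, ⟨hp', hq', -⟩, -⟩ := h'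
    simp only [Prod.mk.injEq] at e
    obtain rfl : p = p' := Prod.ext e.1.1 e.2.1
    obtain rfl : q = q' := Prod.ext e.1.2 e.2.2
    obtain rfl : i = j := by
      by_contra hij
      exact hpq <| card_le_one.1 (hmeet hi hj hij) p (mem_inter.2 ⟨hp, hp'⟩) q
        (mem_inter.2 ⟨hq, hq'⟩)
    rfl

theorem card_mul_pow_three_le_of_isIncreasingCurve {B : Finset α} {D : Finset β} {L : Finset ι}
    {ℓ : ι → Finset (α × β)} {t : ℕ} (ht : 2 ≤ t) (hsub : ∀ i ∈ L, ℓ i ⊆ B ×ˢ D)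
    (hinc : ∀ i ∈ L, IsIncreasingCurve (ℓ i))
    (hmeet : (L : Set ι).Pairwise fun i j ↦ #(ℓ i ∩ ℓ j) ≤ 1) (hcard : ∀ i ∈ L, t ≤ #(ℓ i)) :
    #L * t ^ 3 ≤ 128 * #B ^ 2 * #D ^ 2 := by
  rcases L.eq_empty_or_nonempty with rfl | ⟨i₀, hi₀⟩
  · simp
  obtain ⟨hB, hD⟩ := (hinc i₀ hi₀).card_le_of_subset_product (hsub i₀ hi₀)
  have ht₀ := hcard i₀ hi₀
  obtain ⟨k, hk, hkt, htk⟩ : ∃ k, 0 < k ∧ 4 * k ≤ t + 3 ∧ t ≤ 4 * k :=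
    ⟨(t + 3) / 4, by omega, by omega, by omega⟩
  obtain ⟨f, hf, hfk, hfB⟩ := exists_monotone_coloring (B := B) hk (by omega)
  obtain ⟨g, hg, hgk, hgD⟩ := exists_monotone_coloring (B := D) hk (by omega)
  set U := #(monochromaticPairs B f)
  set V := #(monochromaticPairs D g)
  have hUV : #L * t ≤ 2 * (U * V) := by
    calc #L * t
        ≤ ∑ i ∈ L, 2 * #{p ∈ (ℓ i).offDiag | f p.1.1 = f p.2.1 ∧ g p.1.2 = g p.2.2} := by
          refine card_nsmul_le_sum L _ t fun i hi ↦ ?_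
          have := (hinc i hi).two_mul_card_le hf hg hfk hgk
          have := hcard i hi
          omega
      _ ≤ 2 * (U * V) := by
          rw [← mul_sum]
          exact Nat.mul_le_mul_left 2 (sum_card_filter_offDiag_le hsub hmeet f g)
  calc #L * t ^ 3 = #L * t * t ^ 2 := by ring
    _ ≤ 2 * (U * V) * (4 * k) ^ 2 := by gcongr
    _ = 32 * (U * k) * (V * k) := by ring
    _ ≤ 32 * (2 * #B ^ 2) * (2 * #D ^ 2) := by gcongr
    _ = 128 * #B ^ 2 * #D ^ 2 := by ring

end Incidences

section Layers

variable {ι : Type*} {X : Finset ι} {r : ι → ℕ} {M : ℝ}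

theorem sum_sum_Ioc_eq_sum_card_mul {R : Type*} [Semiring R] {k N : ℕ} (hN : ∀ x ∈ X, r x ≤ N)
    (w : ℕ → R) :
    ∑ x ∈ X, ∑ j ∈ Ioc k (r x), w j = ∑ j ∈ Ioc k N, #{x ∈ X | j ≤ r x} * w j := by
  rw [sum_comm' (t' := Ioc k N) (s' := fun j ↦ {x ∈ X | j ≤ r x})]
  · simp only [sum_const, nsmul_eq_mul]
  · intro x j
    simp only [mem_Ioc, mem_filter]
    grind

theorem sq_le_sq_add_sum_Ioc {k n : ℕ} (h : k ≤ n) :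
    (n : ℝ) ^ 2 ≤ (k : ℝ) ^ 2 + ∑ j ∈ Ioc k n, 2 * (j : ℝ) := by
  induction n, h using Nat.le_induction with
  | base => simp
  | succ n hn ih =>
    rw [sum_Ioc_succ_top hn]
    push_cast
    linarith

theorem pow_three_le_sum_Ioc (n : ℕ) : (n : ℝ) ^ 3 ≤ ∑ j ∈ Ioc 0 n, 3 * (j : ℝ) ^ 2 := by
  induction n with
  | zero => simp
  | succ n ih =>
    rw [sum_Ioc_succ_top n.zero_le]
    push_cast
    linarith [(Nat.cast_nonneg n : (0 : ℝ) ≤ n)]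

theorem sum_sq_filter_nat_le (h : ∀ t : ℕ, 1 ≤ t → (#{x ∈ X | t ≤ r x} : ℝ) * t ^ 3 ≤ M) {k : ℕ}
    (hk : 1 ≤ k) : ∑ x ∈ X with k ≤ r x, (r x : ℝ) ^ 2 ≤ 3 * M / k := by
  have hk₀ : (0 : ℝ) < k := by exact_mod_cast hk
  have hM : 0 ≤ M := le_trans (by positivity) (h 1 le_rfl)
  set N := max (X.sup r) k
  have hN : ∀ x ∈ X.filter (k ≤ r ·), r x ≤ N := fun x hx ↦
    (le_sup (mem_filter.1 hx).1).trans (le_max_left _ _)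
  have layer_le : ∀ j ∈ Ioc k N,
      (#{x ∈ X.filter (k ≤ r ·) | j ≤ r x} : ℝ) * (2 * j) ≤ 2 * M * ((j : ℝ) ^ 2)⁻¹ := by
    intro j hj
    have hkj : k < j := (mem_Ioc.1 hj).1
    have hj₀ : (0 : ℝ) < j := by exact_mod_cast hk.trans hkj.le
    have hlayer : {x ∈ X.filter (k ≤ r ·) | j ≤ r x} = {x ∈ X | j ≤ r x} := by
      rw [filter_filter]
      exact filter_congr fun x _ ↦ and_iff_right_of_imp hkj.le.trans
    rw [hlayer, ← div_eq_mul_inv, le_div_iff₀ (by positivity)]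
    linear_combination 2 * h j (hk.trans hkj.le)
  calc ∑ x ∈ X with k ≤ r x, (r x : ℝ) ^ 2
      ≤ ∑ x ∈ X with k ≤ r x, ((k : ℝ) ^ 2 + ∑ j ∈ Ioc k (r x), 2 * (j : ℝ)) :=
        sum_le_sum fun x hx ↦ sq_le_sq_add_sum_Ioc (mem_filter.1 hx).2
    _ = #{x ∈ X | k ≤ r x} * (k : ℝ) ^ 2
          + ∑ j ∈ Ioc k N, #{x ∈ X.filter (k ≤ r ·) | j ≤ r x} * (2 * (j : ℝ)) := by
        rw [sum_add_distrib, sum_const, nsmul_eq_mul, sum_sum_Ioc_eq_sum_card_mul hN]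
    _ ≤ M / k + ∑ j ∈ Ioc k N, 2 * M * ((j : ℝ) ^ 2)⁻¹ := by
        refine add_le_add ?_ (sum_le_sum layer_le)
        rw [le_div_iff₀ hk₀]
        linear_combination h k hk
    _ ≤ M / k + 2 * M * (k : ℝ)⁻¹ := by
        rw [← mul_sum]
        gcongr
        exact (sum_Ioc_inv_sq_le_sub (by omega) (le_max_right _ _)).trans
          (sub_le_self _ (by positivity))
    _ = 3 * M / k := by ring

theorem sum_sq_filter_le (h : ∀ t : ℕ, 1 ≤ t → (#{x ∈ X | t ≤ r x} : ℝ) * t ^ 3 ≤ M) {τ : ℝ}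
    (hτ : 0 < τ) : ∑ x ∈ X with τ ≤ r x, (r x : ℝ) ^ 2 ≤ 3 * M / τ := by
  have hM : 0 ≤ M := le_trans (by positivity) (h 1 le_rfl)
  simp only [← Nat.ceil_le]
  exact (sum_sq_filter_nat_le h (Nat.one_le_ceil_iff.2 hτ)).trans <| by
    gcongr
    exact Nat.le_ceil τ

theorem sum_sq_le (h : ∀ t : ℕ, 1 ≤ t → (#{x ∈ X | t ≤ r x} : ℝ) * t ^ 3 ≤ M) {τ : ℝ}
    (hτ : 0 < τ) : ∑ x ∈ X, (r x : ℝ) ^ 2 ≤ 3 * M / τ + τ * ∑ x ∈ X, (r x : ℝ) := by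
  rw [← sum_filter_add_sum_filter_not X (fun x ↦ τ ≤ r x)]
  refine add_le_add (sum_sq_filter_le h hτ) ?_
  calc ∑ x ∈ X with ¬ τ ≤ r x, (r x : ℝ) ^ 2 ≤ ∑ x ∈ X with ¬ τ ≤ r x, τ * r x :=
        sum_le_sum fun x hx ↦ by
          rw [sq]
          gcongr
          exact (not_le.1 (mem_filter.1 hx).2).le
    _ ≤ ∑ x ∈ X, τ * r x :=
        sum_le_sum_of_subset_of_nonneg (filter_subset _ _) fun _ _ _ ↦ by positivity
    _ = τ * ∑ x ∈ X, (r x : ℝ) := (mul_sum _ _ _).symm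

theorem sum_pow_three_le (h : ∀ t : ℕ, 1 ≤ t → (#{x ∈ X | t ≤ r x} : ℝ) * t ^ 3 ≤ M) {N : ℕ}
    (hN : ∀ x ∈ X, r x ≤ N) : ∑ x ∈ X, (r x : ℝ) ^ 3 ≤ 3 * M * (1 + Real.log N) := by
  have hM : 0 ≤ M := le_trans (by positivity) (h 1 le_rfl)
  have layer_le : ∀ j ∈ Ioc 0 N,
      (#{x ∈ X | j ≤ r x} : ℝ) * (3 * (j : ℝ) ^ 2) ≤ 3 * M * (j : ℝ)⁻¹ := by
    intro j hj
    have hj₁ : 1 ≤ j := (mem_Ioc.1 hj).1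
    have hj₀ : (0 : ℝ) < j := by exact_mod_cast hj₁
    rw [← div_eq_mul_inv, le_div_iff₀ hj₀]
    linear_combination 3 * h j hj₁
  have harmonic_le : ∑ j ∈ Ioc 0 N, (j : ℝ)⁻¹ ≤ 1 + Real.log N := by
    simpa [harmonic_eq_sum_Icc, ← Icc_add_one_left_eq_Ioc] using harmonic_le_one_add_log N
  calc ∑ x ∈ X, (r x : ℝ) ^ 3
      ≤ ∑ x ∈ X, ∑ j ∈ Ioc 0 (r x), 3 * (j : ℝ) ^ 2 := sum_le_sum fun x _ ↦ pow_three_le_sum_Ioc _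
    _ = ∑ j ∈ Ioc 0 N, #{x ∈ X | j ≤ r x} * (3 * (j : ℝ) ^ 2) := sum_sum_Ioc_eq_sum_card_mul hN _
    _ ≤ ∑ j ∈ Ioc 0 N, 3 * M * (j : ℝ)⁻¹ := sum_le_sum layer_le
    _ ≤ 3 * M * (1 + Real.log N) := by
        rw [← mul_sum]
        gcongr

end Layers

section Energy

theorem sum_addConvolution_neg {G : Type*} [AddGroup G] [DecidableEq G] (A B : Finset G) :
    ∑ s ∈ A - B, A.addConvolution (-B) s = #A * #B := by
  rw [← card_neg B, ← card_product, sub_eq_add_neg]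
  exact (card_eq_sum_card_fiberwise fun p hp ↦
    add_mem_add (mem_product.1 hp).1 (mem_product.1 hp).2).symm

variable {G : Type*} [AddCommGroup G] [DecidableEq G]

theorem addEnergy_neg_right (A B : Finset G) : E[A, -B] = E[A, B] := by
  refine card_equiv (.prodCongr (.refl _) ((Equiv.prodComm _ _).trans <|
    .prodCongr (.neg G) (.neg G))) ?_
  rintro ⟨⟨a, a'⟩, b, b'⟩
  simp only [mem_filter, mem_product, mem_neg', Equiv.prodCongr_apply, Equiv.trans_apply,
    Equiv.coe_refl, Prod.map, Equiv.prodComm_apply, Prod.swap, Equiv.neg_apply, id_eq]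
  grind

theorem addEnergy_eq_sum_addConvolution_neg_sq (A B : Finset G) :
    E[A, B] = ∑ s ∈ A - B, A.addConvolution (-B) s ^ 2 := by
  rw [← addEnergy_neg_right, addEnergy_eq_sum_sq', sub_eq_add_neg]
  rfl

theorem mem_inter_vadd {A B : Finset G} {s x : G} : x ∈ A ∩ (s +ᵥ B) ↔ x ∈ A ∧ x - s ∈ B := by
  rw [mem_inter, ← neg_vadd_mem_iff, vadd_eq_add, neg_add_eq_sub]

theorem sum_addEnergy_inter_vadd_le (A B T : Finset G) :
    ∑ s ∈ T, E[B, A ∩ (s +ᵥ A)] ≤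
      ∑ u ∈ B - B, B.addConvolution (-B) u * A.addConvolution (-A) u ^ 2 := by
  let R (Y : Finset G) (u : G) : Finset (G × G) := {p ∈ Y ×ˢ Y | p.1 - p.2 = u}
  have hcard : ∀ u, B.addConvolution (-B) u * A.addConvolution (-A) u ^ 2 =
      #(R B u ×ˢ R A u ×ˢ R A u) := fun u ↦ by
    rw [card_product, card_product, card_sub_eq, card_sub_eq, sq]
  simp_rw [hcard, addEnergy, ← card_sigma]
  refine card_le_card_of_injOn (fun z ↦ ⟨z.2.1.1 - z.2.1.2, (z.2.1.1, z.2.1.2),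
    (z.2.2.2, z.2.2.1), (z.2.2.2 - z.1, z.2.2.1 - z.1)⟩) ?_ ?_
  · rintro ⟨s, ⟨b, b'⟩, a, a'⟩ h
    simp only [R, mem_coe, mem_sigma, mem_filter, mem_product, mem_inter_vadd] at h ⊢
    obtain ⟨-, ⟨⟨hb, hb'⟩, ⟨ha, has⟩, ha', has'⟩, e⟩ := h
    have hab : a' - a = b - b' := by grind
    exact ⟨sub_mem_sub hb hb', ⟨⟨hb, hb'⟩, trivial⟩, ⟨⟨ha', ha⟩, hab⟩, ⟨has', has⟩,
      (sub_sub_sub_cancel_right a' a s).trans hab⟩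
  · rintro ⟨s, ⟨b, b'⟩, a, a'⟩ _ ⟨s', ⟨c, c'⟩, d, d'⟩ _ e
    simp only [Sigma.mk.injEq, heq_eq_eq, Prod.mk.injEq] at e
    obtain ⟨_, ⟨rfl, rfl⟩, ⟨rfl, rfl⟩, h, _⟩ := e
    obtain rfl : s = s' := sub_right_injective h
    rfl

theorem sum_card_mul_card_add_inter_vadd_le (A B T : Finset G) :
    ∑ s ∈ T, #(A ∩ (s +ᵥ A)) * #(B + A ∩ (s +ᵥ A)) ≤ E[A, B + A] := by
  simp_rw [addEnergy, ← card_product, ← card_sigma]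
  refine card_le_card_of_injOn (fun z ↦ ((z.2.1, z.2.1 - z.1), (z.2.2 - z.1, z.2.2))) ?_ ?_
  · rintro ⟨s, a, y⟩ h
    simp only [mem_coe, mem_sigma, mem_filter, mem_product, mem_inter_vadd, mem_add] at h ⊢
    obtain ⟨-, ⟨ha, has⟩, b, hb, c, ⟨hc, hcs⟩, rfl⟩ := h
    exact ⟨⟨⟨ha, has⟩, ⟨b, hb, c - s, hcs, by abel⟩, b, hb, c, hc, rfl⟩, by abel⟩
  · rintro ⟨s, a, y⟩ _ ⟨s', a', y'⟩ _ e
    simp only [Prod.mk.injEq] at e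
    obtain ⟨⟨rfl, h⟩, _, rfl⟩ := e
    obtain rfl : s = s' := sub_right_injective h
    rfl

theorem sq_card_mul_sq_sum_sq_le (A B : Finset G) {T : Finset G} {τ : ℝ}
    (hT : ∀ s ∈ T, (A.addConvolution (-A) s : ℝ) ≤ τ) (hτ : 0 ≤ τ) :
    (#B : ℝ) ^ 2 * (∑ s ∈ T, (A.addConvolution (-A) s : ℝ) ^ 2) ^ 2 ≤
      τ * (∑ u ∈ B - B, (B.addConvolution (-B) u : ℝ) * (A.addConvolution (-A) u : ℝ) ^ 2) *
        E[A, B + A] := by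
  set S : G → Finset G := fun s ↦ A ∩ (s +ᵥ A)
  have hS (s : G) : A.addConvolution (-A) s = #(S s) := (card_inter_vadd A A s).symm
  have cauchy_schwarz (s : G) : ((#B : ℝ) * (#(S s) : ℝ) ^ 2) ^ 2 ≤
      #(S s) * (E[B, S s] : ℝ) * (#(S s) * #(B + S s)) := by
    have h : (#B : ℝ) ^ 2 * (#(S s) : ℝ) ^ 2 ≤ #(B + S s) * E[B, S s] := by
      exact_mod_cast le_card_add_mul_addEnergy B (S s)
    linear_combination (#(S s) : ℝ) ^ 2 * h
  have sum_energy : ∑ s ∈ T, (#(S s) : ℝ) * E[B, S s] ≤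
      τ * ∑ u ∈ B - B, (B.addConvolution (-B) u : ℝ) * (A.addConvolution (-A) u : ℝ) ^ 2 := by
    calc ∑ s ∈ T, (#(S s) : ℝ) * E[B, S s] ≤ ∑ s ∈ T, τ * E[B, S s] :=
          sum_le_sum fun s hs ↦ by
            gcongr
            exact hS s ▸ hT s hs
      _ ≤ _ := by
          rw [← mul_sum]
          gcongr
          exact_mod_cast sum_addEnergy_inter_vadd_le A B T
  have sum_card : ∑ s ∈ T, (#(S s) : ℝ) * #(B + S s) ≤ E[A, B + A] := by
    exact_mod_cast sum_card_mul_card_add_inter_vadd_le A B T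
  calc (#B : ℝ) ^ 2 * (∑ s ∈ T, (A.addConvolution (-A) s : ℝ) ^ 2) ^ 2
      = (∑ s ∈ T, (#B : ℝ) * (#(S s) : ℝ) ^ 2) ^ 2 := by simp only [hS, ← mul_sum, mul_pow]
    _ ≤ (∑ s ∈ T, #(S s) * (E[B, S s] : ℝ)) * ∑ s ∈ T, (#(S s) : ℝ) * #(B + S s) :=
        sum_sq_le_sum_mul_sum_of_sq_le_mul T (fun _ _ ↦ by positivity) (fun _ _ ↦ by positivity)
          fun s _ ↦ cauchy_schwarz s
    _ ≤ _ :=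
        mul_le_mul sum_energy sum_card (sum_nonneg fun _ _ ↦ by positivity) <|
          mul_nonneg hτ (sum_nonneg fun _ _ ↦ by positivity)

end Energy

section SzemerediTrotterType

variable {G : Type*} [AddCommGroup G] [DecidableEq G] {A : Finset G} {D : ℝ}

/-- `A` is of Szemerédi–Trotter type with constant `D` if, for every finite set `B` and every
threshold `t`, at most `D |A| |B|² / t³` differences have `t` or more representations as `a - b`.
The product form keeps the inequality free of division. -/
def IsSzemerediTrotterType (A : Finset G) (D : ℝ) : Prop :=
  ∀ (B : Finset G) (t : ℕ), 1 ≤ t →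
    (#{s ∈ A - B | t ≤ A.addConvolution (-B) s} : ℝ) * t ^ 3 ≤ D * #A * #B ^ 2

namespace IsSzemerediTrotterType

theorem pos (h : IsSzemerediTrotterType A D) (hA : A.Nonempty) : 0 < D := by
  have all_popular : {s ∈ A - A | 1 ≤ A.addConvolution (-A) s} = A - A :=
    filter_true_of_mem fun s hs ↦ addConvolution_pos.2 (sub_eq_add_neg A A ▸ hs)
  have hD := h A 1 le_rfl
  rw [all_popular, Nat.cast_one, one_pow, mul_one, mul_assoc] at hD
  have hsub : (0 : ℝ) < #(A - A) := by exact_mod_cast (hA.sub hA).card_pos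
  exact (pos_iff_pos_of_mul_pos (hsub.trans_le hD)).2 (by positivity)

theorem sum_addConvolution_pow_three_le (h : IsSzemerediTrotterType A D) :
    ∑ s ∈ A - A, (A.addConvolution (-A) s : ℝ) ^ 3 ≤
      3 * D * (#A : ℝ) ^ 3 * (1 + Real.log #A) := by
  linear_combination sum_pow_three_le (h A) (N := #A) fun s _ ↦ addConvolution_le_card_left

theorem addEnergy_sq_le (h : IsSzemerediTrotterType A D) (B : Finset G) :
    (E[A, B] : ℝ) ^ 2 ≤ 16 * D * (#A : ℝ) ^ 2 * (#B : ℝ) ^ 3 := by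
  rcases A.eq_empty_or_nonempty with rfl | hA
  · simp
  rcases B.eq_empty_or_nonempty with rfl | hB
  · simp
  have hD := h.pos hA
  set τ := √(D * #B)
  have hτ : 0 < τ := by positivity
  have hτ_sq : τ ^ 2 = D * #B := Real.sq_sqrt (by positivity)
  have energy_le : (E[A, B] : ℝ) ≤ 4 * τ * #A * #B := by
    calc (E[A, B] : ℝ) = ∑ s ∈ A - B, (A.addConvolution (-B) s : ℝ) ^ 2 := by
          exact_mod_cast addEnergy_eq_sum_addConvolution_neg_sq A B
      _ ≤ 3 * (D * #A * #B ^ 2) / τ + τ * ∑ s ∈ A - B, (A.addConvolution (-B) s : ℝ) :=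
          sum_sq_le (h B) hτ
      _ = 3 * (τ ^ 2 * #A * #B) / τ + τ * (#A * #B) := by
          rw [← Nat.cast_sum, sum_addConvolution_neg, Nat.cast_mul, hτ_sq]
          ring
      _ = 4 * τ * #A * #B := by
          field_simp
          ring
  calc (E[A, B] : ℝ) ^ 2 ≤ (4 * τ * #A * #B) ^ 2 := by gcongr
    _ = 16 * τ ^ 2 * #A ^ 2 * #B ^ 2 := by ring
    _ = 16 * D * #A ^ 2 * #B ^ 3 := by rw [hτ_sq]; ring

-- The cutoff makes the popular differences contribute at most half of the lower bound
-- `|A| ^ 4 / |A + A|` for the energy.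
theorem card_pow_four_le (h : IsSzemerediTrotterType A D) (hA : A.Nonempty) :
    (#A : ℝ) ^ 4 ≤ 2 * #(A + A) * ∑ s ∈ A - A with
      ¬ 6 * D * #(A + A) / #A ≤ A.addConvolution (-A) s, (A.addConvolution (-A) s : ℝ) ^ 2 := by
  have hD := h.pos hA
  set τ := 6 * D * #(A + A) / #A with hτ
  have popular_le : ∑ s ∈ A - A with τ ≤ A.addConvolution (-A) s,
      (A.addConvolution (-A) s : ℝ) ^ 2 ≤ (#A : ℝ) ^ 4 / (2 * #(A + A)) := by
    refine (sum_sq_filter_le (h A) (by positivity)).trans_eq ?_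
    rw [hτ]
    field_simp
    norm_num
  have energy_ge : (#A : ℝ) ^ 4 ≤
      #(A + A) * ∑ s ∈ A - A, (A.addConvolution (-A) s : ℝ) ^ 2 := by
    have := le_card_add_mul_addEnergy A A
    rw [addEnergy_eq_sum_addConvolution_neg_sq, ← pow_add] at this
    exact_mod_cast this
  rw [← sum_filter_add_sum_filter_not (A - A) fun s ↦ τ ≤ A.addConvolution (-A) s] at energy_ge
  rw [le_div_iff₀ (by positivity)] at popular_le
  linear_combination 2 * energy_ge + popular_le

theorem card_pow_fourteen_le (h : IsSzemerediTrotterType A D) :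
    (#A : ℝ) ^ 14 ≤ 82944 * D ^ 5 * (#(A + A) : ℝ) ^ 9 * (1 + Real.log #A) ^ 2 := by
  rcases A.eq_empty_or_nonempty with rfl | hA
  · simp
  have hD := h.pos hA
  set τ := 6 * D * #(A + A) / #A with hτ
  set Z := ∑ s ∈ A - A with ¬ τ ≤ A.addConvolution (-A) s, (A.addConvolution (-A) s : ℝ) ^ 2
  set L := 1 + Real.log #A
  have hZ : (#A : ℝ) ^ 4 ≤ 2 * #(A + A) * Z := h.card_pow_four_le hA
  have hZ_sq : (#A : ℝ) ^ 2 * Z ^ 2 ≤ τ * (3 * D * #A ^ 3 * L) * E[A, A + A] := by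
    calc (#A : ℝ) ^ 2 * Z ^ 2
        ≤ τ * (∑ s ∈ A - A, (A.addConvolution (-A) s : ℝ) * (A.addConvolution (-A) s : ℝ) ^ 2) *
            E[A, A + A] :=
          sq_card_mul_sq_sum_sq_le A A (fun s hs ↦ (not_le.1 (mem_filter.1 hs).2).le)
            (by positivity)
      _ ≤ τ * (3 * D * #A ^ 3 * L) * E[A, A + A] := by
          simp only [← pow_succ']
          gcongr
          exact h.sum_addConvolution_pow_three_le
  refine le_of_mul_le_mul_right ?_ (by positivity : (0 : ℝ) < #A ^ 6)
  calc (#A : ℝ) ^ 14 * #A ^ 6 = #A ^ 4 * (#A ^ 4) ^ 4 := by ring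
    _ ≤ #A ^ 4 * (2 * #(A + A) * Z) ^ 4 := by gcongr
    _ = 16 * #(A + A) ^ 4 * (#A ^ 2 * Z ^ 2) ^ 2 := by ring
    _ ≤ 16 * #(A + A) ^ 4 * (τ * (3 * D * #A ^ 3 * L) * E[A, A + A]) ^ 2 := by gcongr
    _ = 16 * #(A + A) ^ 4 * (τ * (3 * D * #A ^ 3 * L)) ^ 2 * E[A, A + A] ^ 2 := by ring
    _ ≤ 16 * #(A + A) ^ 4 * (τ * (3 * D * #A ^ 3 * L)) ^ 2 *
          (16 * D * #A ^ 2 * #(A + A) ^ 3) := by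
        gcongr
        exact h.addEnergy_sq_le (A + A)
    _ = 82944 * D ^ 5 * #(A + A) ^ 9 * L ^ 2 * #A ^ 6 := by
        rw [hτ]
        field_simp
        ring

end IsSzemerediTrotterType

end SzemerediTrotterType

theorem one_add_log_le_three_mul_log {x : ℝ} (hx : 2 ≤ x) :
    1 + Real.log x ≤ 3 * Real.log x := by
  have := Real.log_le_log two_pos hx
  linarith [Real.log_two_gt_d9]

section OrderedRing

variable {R : Type*} [Ring R] [LinearOrder R] {A B C T Y : Finset R} {s s' c c' : R} {p q : R × R}

/-- The points of the grid `B ×ˢ Y` on the line `y = (x + s) * c`. If `c ∈ C` and `Y = A * C`, every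
representation `s = a - b` with `a ∈ A` and `b ∈ B` yields the point `(b, a * c)` on it. -/
def gridLine (B Y : Finset R) (s c : R) : Finset (R × R) :=
  {p ∈ B ×ˢ Y | p.2 = (p.1 + s) * c}

theorem mem_gridLine : p ∈ gridLine B Y s c ↔ (p.1 ∈ B ∧ p.2 ∈ Y) ∧ p.2 = (p.1 + s) * c := by
  rw [gridLine, mem_filter, mem_product]

theorem snd_sub_snd_of_mem_gridLine (hp : p ∈ gridLine B Y s c) (hq : q ∈ gridLine B Y s c) :
    p.2 - q.2 = (p.1 - q.1) * c := by
  rw [(mem_gridLine.1 hp).2, (mem_gridLine.1 hq).2, ← sub_mul, add_sub_add_right_eq_sub]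

theorem addConvolution_neg_le_card_gridLine (A B : Finset R) (s : R) (hc : c ∈ C) :
    A.addConvolution (-B) s ≤ #(gridLine B (A * C) s c) := by
  rw [← card_sub_eq]
  refine card_le_card_of_injOn (fun p ↦ (p.2, p.1 * c)) ?_ ?_
  · rintro ⟨a, b⟩ hab
    obtain ⟨hmem, rfl⟩ := mem_filter.1 hab
    obtain ⟨ha, hb⟩ := mem_product.1 hmem
    exact mem_gridLine.2 ⟨⟨hb, mul_mem_mul ha hc⟩, by rw [add_sub_cancel]⟩
  · rintro ⟨a, b⟩ hab ⟨a', b'⟩ hab' e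
    obtain rfl : b = b' := (Prod.mk.inj e).1
    have ha : a - b = s := (mem_filter.1 hab).2
    have ha' : a' - b = s := (mem_filter.1 hab').2
    exact Prod.ext (sub_left_injective (ha.trans ha'.symm)) rfl

variable [IsStrictOrderedRing R]

theorem isIncreasingCurve_gridLine (B Y : Finset R) (s : R) (hc : 0 < c) :
    IsIncreasingCurve (gridLine B Y s c) := by
  intro p hp q hq
  rw [(mem_gridLine.1 hp).2, (mem_gridLine.1 hq).2, mul_lt_mul_iff_of_pos_right hc,
    add_lt_add_iff_right]

theorem card_gridLine_inter_le_one (hc : 0 < c)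
    (hne : (s, c) ≠ (s', c')) : #(gridLine B Y s c ∩ gridLine B Y s' c') ≤ 1 := by
  refine card_le_one.2 fun p hp q hq ↦ by_contra fun hpq ↦ ?_
  obtain ⟨hp₁, hp₂⟩ := mem_inter.1 hp
  obtain ⟨hq₁, hq₂⟩ := mem_inter.1 hq
  have hfst : p.1 - q.1 ≠ 0 := fun e ↦ hpq <| Prod.ext (sub_eq_zero.1 e) <|
    ((isIncreasingCurve_gridLine B Y s hc).fst_eq_iff hp₁ hq₁).1 (sub_eq_zero.1 e)
  obtain rfl : c = c' := mul_left_cancel₀ hfst <|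
    (snd_sub_snd_of_mem_gridLine hp₁ hq₁).symm.trans (snd_sub_snd_of_mem_gridLine hp₂ hq₂)
  have shift : p.1 + s = p.1 + s' :=
    mul_right_cancel₀ hc.ne' ((mem_gridLine.1 hp₁).2.symm.trans (mem_gridLine.1 hp₂).2)
  exact hne (congrArg (·, c) (add_left_cancel shift))

theorem card_mul_card_mul_pow_three_le (hA : 0 ∉ A) (hC : ∀ c ∈ C, 0 < c) {t : ℕ} (ht : 1 ≤ t)
    (hT : ∀ s ∈ T, t ≤ A.addConvolution (-B) s) :
    #T * #C * t ^ 3 ≤ 128 * #B ^ 2 * #(A * C) ^ 2 := by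
  obtain rfl | ht := ht.eq_or_lt
  · have hTsub : T ⊆ A - B := fun s hs ↦ sub_eq_add_neg A B ▸ addConvolution_pos.1 (hT s hs)
    rcases T.eq_empty_or_nonempty with rfl | hTne
    · simp
    rcases C.eq_empty_or_nonempty with rfl | ⟨c, hc⟩
    · simp
    obtain ⟨a, ha, -⟩ := mem_sub.1 (hTsub hTne.choose_spec)
    calc #T * #C * 1 ^ 3 ≤ #A * #B * #C := by
          rw [one_pow, mul_one]
          gcongr
          exact (card_le_card hTsub).trans card_sub_le
      _ ≤ #(A * C) * #B * #(A * C) :=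
          Nat.mul_le_mul (Nat.mul_le_mul_right _ (card_le_card_mul_right₀ hc (hC c hc).ne'))
            (card_le_card_mul_left₀ ha (ne_of_mem_of_not_mem ha hA))
      _ = 1 * #B * #(A * C) ^ 2 := by ring
      _ ≤ 128 * #B ^ 2 * #(A * C) ^ 2 := by
          gcongr
          · norm_num
          · exact Nat.le_self_pow two_ne_zero _
  · rw [← card_product]
    refine card_mul_pow_three_le_of_isIncreasingCurve (ℓ := fun z ↦ gridLine B (A * C) z.1 z.2) ht
      (fun _ _ ↦ filter_subset _ _) ?_ ?_ ?_
    · exact fun z hz ↦ isIncreasingCurve_gridLine _ _ _ (hC _ (mem_product.1 hz).2)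
    · exact fun z hz z' _ hne ↦ card_gridLine_inter_le_one (hC _ (mem_product.1 hz).2) hne
    · exact fun z hz ↦ (hT _ (mem_product.1 hz).1).trans <|
        addConvolution_neg_le_card_gridLine A B _ (mem_product.1 hz).2

theorem isSzemerediTrotterType_of_pos (hA : ∀ a ∈ A, 0 < a) :
    IsSzemerediTrotterType A (128 * (#(A * A) : ℝ) ^ 2 / (#A : ℝ) ^ 2) := by
  intro B t ht
  rcases A.eq_empty_or_nonempty with rfl | hne
  · simp
  have key : (#{s ∈ A - B | t ≤ A.addConvolution (-B) s} : ℝ) * #A * t ^ 3 ≤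
      128 * #B ^ 2 * #(A * A) ^ 2 := by
    exact_mod_cast card_mul_card_mul_pow_three_le (fun h ↦ (hA 0 h).false) hA ht
      fun s hs ↦ (mem_filter.1 hs).2
  rw [div_mul_eq_mul_div, div_mul_eq_mul_div, le_div_iff₀ (by positivity)]
  linear_combination (#A : ℝ) * key

theorem stmt18_general (A : Finset R) (hA : ∀ a ∈ A, 0 < a) (hcard : 2 ≤ #A) :
    (#(A * A) : ℝ) ^ 10 * (#(A + A) : ℝ) ^ 9 ≥
      (10 ^ 17)⁻¹ * (#A : ℝ) ^ 24 / (Real.log #A) ^ 2 := by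
  have hn : (2 : ℝ) ≤ #A := by exact_mod_cast hcard
  have hlog : 0 < Real.log #A := Real.log_pos (by linarith)
  have key := (isSzemerediTrotterType_of_pos hA).card_pow_fourteen_le
  rw [ge_iff_le, div_le_iff₀ (by positivity), inv_mul_le_iff₀ (by positivity)]
  calc (#A : ℝ) ^ 24 = #A ^ 10 * #A ^ 14 := by ring
    _ ≤ #A ^ 10 * (82944 * (128 * #(A * A) ^ 2 / #A ^ 2) ^ 5 * #(A + A) ^ 9 *
          (1 + Real.log #A) ^ 2) := by gcongr
    _ = 82944 * 128 ^ 5 * (#(A * A) ^ 10 * #(A + A) ^ 9 * (1 + Real.log #A) ^ 2) := by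
        field_simp
    _ ≤ 82944 * 128 ^ 5 * (#(A * A) ^ 10 * #(A + A) ^ 9 * (3 * Real.log #A) ^ 2) := by
        gcongr
        exact one_add_log_le_three_mul_log hn
    _ = 9 * 82944 * 128 ^ 5 * (#(A * A) ^ 10 * #(A + A) ^ 9 * Real.log #A ^ 2) := by ring
    _ ≤ 10 ^ 17 * (#(A * A) ^ 10 * #(A + A) ^ 9 * Real.log #A ^ 2) := by
        gcongr
        norm_num

end OrderedRing

theorem stmt18 : ∃ K : ℝ, 0 < K ∧
    ∀ A : Finset ℝ, (∀ a ∈ A, 0 < a) → 2 ≤ A.card →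
    ((A * A).card : ℝ) ^ 10 * ((A + A).card : ℝ) ^ 9 ≥
      K * (A.card : ℝ) ^ 24 / (Real.log A.card) ^ 2 :=
  ⟨(10 ^ 17)⁻¹, by norm_num, stmt18_general⟩
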